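/- arXiv:1503.08467 — 2 statements merged into one kernel-verified Lean document; each statement's English description precedes it below -/
import Mathlib

section
/- For a Lindelöf T1 space X the following are equivalent: (1) X is zero-dimensional; (2) player TWO has a winning strategy in the game G^1_d(𝒪,𝒪) on X, i.e., every open cover 𝒰 of X admits a discrete family of open sets, each contained in some member of 𝒰, whose union is X. -/
/-!
A pairwise disjoint open cover is discrete, and a discrete family is pairwise disjoint, so TWO wins
`G^1_d(𝒪,𝒪)` exactly when the space is ultraparacompact. A zero-dimensional Lindelöf space is
ultraparacompact because a countable clopen refinement of a cover can be made disjoint by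
subtracting from each member the finitely many earlier ones. Conversely, given `x ∈ U` with `U`
open, the R₀ axiom (a consequence of T1) gives `closure {x} ⊆ U`, so `{U, (closure {x})ᶜ}` is an
open cover; a disjoint open refinement of it consists of clopen sets, and its member containing `x`
must lie in `U`.
-/

namespace SSG

/-- A family of subsets of a topological space is *discrete* if every point has a
neighborhood meeting at most one member of the family. -/
def IsDiscreteFam {X : Type*} [TopologicalSpace X] (𝒜 : Set (Set X)) : Prop :=
  ∀ x : X, ∃ U ∈ nhds x, {A | A ∈ 𝒜 ∧ (A ∩ U).Nonempty}.Subsingleton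

/-- A family of open subsets covering the whole space. -/
def IsOpenCover {X : Type*} [TopologicalSpace X] (𝒰 : Set (Set X)) : Prop :=
  (∀ U ∈ 𝒰, IsOpen U) ∧ ⋃₀ 𝒰 = Set.univ

/-- A legal move of TWO in the selective strong screenability game, in response to the
open cover `𝒰` played by ONE: a discrete family of open sets, each contained in some
member of `𝒰`. -/
def LegalTwoMove {X : Type*} [TopologicalSpace X] (𝒰 𝒱 : Set (Set X)) : Prop :=
  IsDiscreteFam 𝒱 ∧ ∀ V ∈ 𝒱, IsOpen V ∧ ∃ U ∈ 𝒰, V ⊆ U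

/-- ONE has a winning strategy in the game `G^ω_d(𝒪, 𝒪_Y)` on `X`:
there is a strategy `σ` (a function from finite histories of TWO's moves to open covers)
such that for every play in which TWO moves legally, the union of TWO's families fails
to cover `Y`. -/
def OneWinsGomega (X : Type*) [TopologicalSpace X] (Y : Set X) : Prop :=
  ∃ σ : List (Set (Set X)) → Set (Set X),
    (∀ h : List (Set (Set X)), IsOpenCover (σ h)) ∧
    ∀ V : ℕ → Set (Set X),
      (∀ n : ℕ, LegalTwoMove (σ (List.ofFn fun i : Fin n => V i)) (V n)) →
      ¬ Y ⊆ ⋃ n : ℕ, ⋃₀ V n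

/-- TWO has a winning strategy in the game `G^ω_d(𝒪, 𝒪_Y)` on `X`:
a strategy `τ` (from finite histories of ONE's moves, including the current inning's move,
to TWO's responses) such that against any sequence of open covers played by ONE, all of
TWO's responses are legal and their union covers `Y`. -/
def TwoWinsGomega (X : Type*) [TopologicalSpace X] (Y : Set X) : Prop :=
  ∃ τ : List (Set (Set X)) → Set (Set X),
    ∀ U : ℕ → Set (Set X), (∀ n : ℕ, IsOpenCover (U n)) →
      (∀ n : ℕ, LegalTwoMove (U n) (τ (List.ofFn fun i : Fin (n+1) => U i))) ∧
      Y ⊆ ⋃ n : ℕ, ⋃₀ τ (List.ofFn fun i : Fin (n+1) => U i)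

/-- TWO has a winning strategy in the one-inning game `G^1_d(𝒪, 𝒪_Y)` on `X`:
every open cover of `X` admits a discrete family of open sets, each contained in some
member of the cover, whose union contains `Y`. -/
def TwoWinsGone (X : Type*) [TopologicalSpace X] (Y : Set X) : Prop :=
  ∀ 𝒰 : Set (Set X), IsOpenCover 𝒰 →
    ∃ 𝒱 : Set (Set X), LegalTwoMove 𝒰 𝒱 ∧ Y ⊆ ⋃₀ 𝒱

/-- ONE has a winning strategy in the Banach–Mazur game `MB(Y,X)`: a strategy `σ`
(from finite histories of TWO's moves to ONE's next move) which always produces a legal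
move (a nonempty open set contained in TWO's last move) whenever TWO has moved legally
so far, and such that for every play in which TWO moves legally,
`Y ∩ ⋂ₙ Oₙ` is nonempty. -/
def OneWinsMB (X : Type*) [TopologicalSpace X] (Y : Set X) : Prop :=
  ∃ σ : List (Set X) → Set X,
    (∀ T : ℕ → Set X, ∀ n : ℕ,
      (∀ k : ℕ, k < n → IsOpen (T k) ∧ (T k).Nonempty ∧
          T k ⊆ σ (List.ofFn fun i : Fin k => T i)) →
      IsOpen (σ (List.ofFn fun i : Fin n => T i)) ∧
      (σ (List.ofFn fun i : Fin n => T i)).Nonempty ∧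
      ∀ k : ℕ, n = k + 1 → σ (List.ofFn fun i : Fin n => T i) ⊆ T k) ∧
    ∀ T : ℕ → Set X,
      (∀ n : ℕ, IsOpen (T n) ∧ (T n).Nonempty ∧
          T n ⊆ σ (List.ofFn fun i : Fin n => T i)) →
      (Y ∩ ⋂ n : ℕ, σ (List.ofFn fun i : Fin n => T i)).Nonempty

/-- TWO has a winning strategy in the Banach–Mazur game `MB(Y,X)`: a strategy `τ`
(from finite histories of ONE's moves to TWO's next move) which always produces a legal
move (a nonempty open subset of ONE's last move) whenever ONE has moved legally
so far, and such that for every play in which ONE moves legally,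
`Y ∩ ⋂ₙ Oₙ` is empty. -/
def TwoWinsMB (X : Type*) [TopologicalSpace X] (Y : Set X) : Prop :=
  ∃ τ : List (Set X) → Set X,
    (∀ O : ℕ → Set X, ∀ n : ℕ,
      (∀ k : ℕ, k ≤ n → IsOpen (O k) ∧ (O k).Nonempty ∧
          ∀ j : ℕ, k = j + 1 → O k ⊆ τ (List.ofFn fun i : Fin (j+1) => O i)) →
      IsOpen (τ (List.ofFn fun i : Fin (n+1) => O i)) ∧
      (τ (List.ofFn fun i : Fin (n+1) => O i)).Nonempty ∧
      τ (List.ofFn fun i : Fin (n+1) => O i) ⊆ O n) ∧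
    ∀ O : ℕ → Set X,
      (∀ n : ℕ, IsOpen (O n) ∧ (O n).Nonempty ∧
          ∀ j : ℕ, n = j + 1 → O n ⊆ τ (List.ofFn fun i : Fin (j+1) => O i)) →
      Y ∩ ⋂ n : ℕ, O n = ∅

/-- A space is ultraparacompact if every open cover has a refinement by pairwise
disjoint open sets still covering the space. -/
def Ultraparacompact (X : Type*) [TopologicalSpace X] : Prop :=
  ∀ 𝒰 : Set (Set X), IsOpenCover 𝒰 →
    ∃ 𝒱 : Set (Set X), (∀ V ∈ 𝒱, IsOpen V ∧ ∃ U ∈ 𝒰, V ⊆ U) ∧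
      𝒱.Pairwise Disjoint ∧ ⋃₀ 𝒱 = Set.univ

/-- A space is zero-dimensional if every point has a neighborhood basis of clopen sets. -/
def ZeroDimensional (X : Type*) [TopologicalSpace X] : Prop :=
  ∀ (x : X) (U : Set X), IsOpen U → x ∈ U → ∃ V : Set X, IsClopen V ∧ x ∈ V ∧ V ⊆ U

/-- A space is strongly zero-dimensional if every *finite* open cover has a refinement
by pairwise disjoint open sets still covering the space. -/
def StronglyZeroDim (X : Type*) [TopologicalSpace X] : Prop :=
  ∀ 𝒰 : Set (Set X), 𝒰.Finite → IsOpenCover 𝒰 →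
    ∃ 𝒱 : Set (Set X), (∀ V ∈ 𝒱, IsOpen V ∧ ∃ U ∈ 𝒰, V ⊆ U) ∧
      𝒱.Pairwise Disjoint ∧ ⋃₀ 𝒱 = Set.univ

/-- `X` has a π-base consisting of nontrivial connected (open) sets. -/
def HasConnectedPiBase (X : Type*) [TopologicalSpace X] : Prop :=
  ∃ P : Set (Set X), (∀ B ∈ P, IsOpen B ∧ IsConnected B ∧ B.Nontrivial) ∧
    ∀ U : Set X, IsOpen U → U.Nonempty → ∃ B ∈ P, B ⊆ U

open Set

section

variable {X : Type*} [TopologicalSpace X] {𝒰 𝒱 : Set (Set X)}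

theorem isClopen_disjointed {ι : Type*} [Preorder ι] [LocallyFiniteOrderBot ι] {V : ι → Set X}
    (hV : ∀ i, IsClopen (V i)) (i : ι) : IsClopen (disjointed V i) :=
  disjointedRec (fun _ j ht ↦ ht.diff (hV j)) (hV i)

theorem closure_singleton_subset_of_isOpen [R0Space X] {x : X} {U : Set X} (hU : IsOpen U)
    (hx : x ∈ U) : closure {x} ⊆ U :=
  fun _ hy ↦ (specializes_iff_mem_closure.2 hy).symm.mem_open hU hx

theorem IsDiscreteFam.pairwise_disjoint (h𝒱 : IsDiscreteFam 𝒱) : 𝒱.Pairwise Disjoint := by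
  intro A hA B hB hAB
  refine Set.disjoint_left.2 fun x hxA hxB ↦ hAB ?_
  obtain ⟨N, hN, hsub⟩ := h𝒱 x
  have hxN : x ∈ N := mem_of_mem_nhds hN
  exact hsub ⟨hA, x, hxA, hxN⟩ ⟨hB, x, hxB, hxN⟩

theorem IsOpenCover.isDiscreteFam (h𝒱 : IsOpenCover 𝒱) (hdisj : 𝒱.Pairwise Disjoint) :
    IsDiscreteFam 𝒱 := by
  intro x
  obtain ⟨V, hV, hxV⟩ := sUnion_eq_univ_iff.1 h𝒱.2 x
  have eq_of_meets : ∀ A ∈ 𝒱, (A ∩ V).Nonempty → A = V := fun A hA hAV ↦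
    hdisj.eq hA hV (not_disjoint_iff_nonempty_inter.2 hAV)
  refine ⟨V, (h𝒱.1 V hV).mem_nhds hxV, ?_⟩
  rintro A ⟨hA, hAV⟩ B ⟨hB, hBV⟩
  rw [eq_of_meets A hA hAV, eq_of_meets B hB hBV]

theorem IsOpenCover.isClopen (h𝒱 : IsOpenCover 𝒱) (hdisj : 𝒱.Pairwise Disjoint) {V : Set X}
    (hV : V ∈ 𝒱) : IsClopen V := by
  have hcover : univ ⊆ V ∪ ⋃₀ (𝒱 \ {V}) := by
    rw [← sUnion_insert, insert_sdiff_singleton, insert_eq_of_mem hV, h𝒱.2]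
  refine isClopen_of_disjoint_cover_open hcover (h𝒱.1 V hV)
    (isOpen_sUnion fun W hW ↦ h𝒱.1 W hW.1) ?_
  exact disjoint_sUnion_right.2 fun W hW ↦ hdisj hV hW.1 (Ne.symm hW.2)

theorem isOpenCover_pair_compl_closure_singleton [R0Space X] {x : X} {U : Set X}
    (hU : IsOpen U) (hx : x ∈ U) : IsOpenCover {U, (closure {x})ᶜ} := by
  refine ⟨?_, ?_⟩
  · rintro A (rfl | rfl)
    exacts [hU, isClosed_closure.isOpen_compl]
  · rw [sUnion_pair, union_comm, ← compl_subset_iff_union, compl_compl]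
    exact closure_singleton_subset_of_isOpen hU hx

theorem ZeroDimensional.exists_seq_isClopen_cover [LindelofSpace X] [Nonempty X]
    (hX : ZeroDimensional X) (h𝒰 : IsOpenCover 𝒰) :
    ∃ V : ℕ → Set X, (∀ n, IsClopen (V n)) ∧ (∀ n, ∃ U ∈ 𝒰, V n ⊆ U) ∧ ⋃ n, V n = univ := by
  have hloc : ∀ x : X, ∃ V, IsClopen V ∧ x ∈ V ∧ ∃ U ∈ 𝒰, V ⊆ U := by
    intro x
    obtain ⟨U, hU, hxU⟩ := sUnion_eq_univ_iff.1 h𝒰.2 x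
    obtain ⟨V, hV, hxV, hVU⟩ := hX x U (h𝒰.1 U hU) hxU
    exact ⟨V, hV, hxV, U, hU, hVU⟩
  choose V hV hxV hVU using hloc
  obtain ⟨f, hf⟩ := isLindelof_univ.indexed_countable_subcover V (fun x ↦ (hV x).isOpen)
    fun x _ ↦ mem_iUnion_of_mem x (hxV x)
  exact ⟨V ∘ f, fun n ↦ hV (f n), fun n ↦ hVU (f n), univ_subset_iff.1 hf⟩

theorem twoWinsGone_univ_iff_ultraparacompact : TwoWinsGone X univ ↔ Ultraparacompact X := by
  constructor
  · intro hwin 𝒰 h𝒰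
    obtain ⟨𝒱, ⟨hdiscrete, hrefine⟩, hcover⟩ := hwin 𝒰 h𝒰
    exact ⟨𝒱, hrefine, hdiscrete.pairwise_disjoint, univ_subset_iff.1 hcover⟩
  · intro hX 𝒰 h𝒰
    obtain ⟨𝒱, hrefine, hdisj, hcover⟩ := hX 𝒰 h𝒰
    have h𝒱 : IsOpenCover 𝒱 := ⟨fun V hV ↦ (hrefine V hV).1, hcover⟩
    exact ⟨𝒱, ⟨h𝒱.isDiscreteFam hdisj, hrefine⟩, hcover.ge⟩

theorem ZeroDimensional.ultraparacompact [LindelofSpace X] (hX : ZeroDimensional X) :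
    Ultraparacompact X := by
  intro 𝒰 h𝒰
  cases isEmpty_or_nonempty X with
  | inl _ => exact ⟨∅, by simp, pairwise_empty _, Subsingleton.elim _ _⟩
  | inr _ =>
    obtain ⟨V, hV, hVU, hcover⟩ := hX.exists_seq_isClopen_cover h𝒰
    refine ⟨range (disjointed V), ?_, (disjoint_disjointed V).range_pairwise, ?_⟩
    · rintro _ ⟨n, rfl⟩
      obtain ⟨U, hU, hVnU⟩ := hVU n
      exact ⟨(isClopen_disjointed hV n).isOpen, U, hU, (disjointed_le V n).trans hVnU⟩
    · rw [sUnion_range, iUnion_disjointed, hcover]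

theorem Ultraparacompact.zeroDimensional [R0Space X] (hX : Ultraparacompact X) :
    ZeroDimensional X := by
  intro x U hU hxU
  obtain ⟨𝒱, hrefine, hdisj, hcover⟩ := hX _ (isOpenCover_pair_compl_closure_singleton hU hxU)
  have h𝒱 : IsOpenCover 𝒱 := ⟨fun V hV ↦ (hrefine V hV).1, hcover⟩
  obtain ⟨V, hV, hxV⟩ := sUnion_eq_univ_iff.1 hcover x
  refine ⟨V, h𝒱.isClopen hdisj hV, hxV, ?_⟩
  obtain ⟨-, A, rfl | rfl, hVA⟩ := hrefine V hV
  · exact hVA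
  · exact absurd (subset_closure (mem_singleton x)) (hVA hxV)

end

theorem statement8_general {X : Type*} [TopologicalSpace X] [LindelofSpace X] [R0Space X] :
    ZeroDimensional X ↔ TwoWinsGone X univ :=
  ⟨fun hX ↦ twoWinsGone_univ_iff_ultraparacompact.2 hX.ultraparacompact,
    fun hX ↦ (twoWinsGone_univ_iff_ultraparacompact.1 hX).zeroDimensional⟩

/-- A Lindelöf T1 space is zero-dimensional iff TWO has a winning strategy
in the one-inning game `G^1_d(𝒪,𝒪)`. -/
theorem statement8 {X : Type*} [TopologicalSpace X] [LindelofSpace X] [T1Space X] :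
    ZeroDimensional X ↔ TwoWinsGone X Set.univ :=
  statement8_general

end SSG
end

section
/- Let Y be a subspace of the real line ℝ. The following are equivalent: (1) player TWO has a winning strategy in the game G^ω_d(𝒪,𝒪_Y) on ℝ; (2) Y is a first category (meager) set of real numbers; (3) player TWO has a winning strategy in the Banach–Mazur game MB(Y,ℝ). -/
namespace SSG

/-!
From a winning strategy of TWO in the covering game, TWO wins the Banach–Mazur game as follows. When
ONE plays an open set `O`, TWO picks a nontrivial connected open `J ⊆ O` and hands to the covering
strategy the cover by the open sets whose closure does not contain `J`. The answer is a discrete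
family; if it were dense in `J`, then by connectedness the closure of a single member would
contain `J`. So `J` minus the closure of the answer is a legal move, and the points that remain in
the end are covered by none of the answers.

A winning strategy of TWO in the Banach–Mazur game yields, for each length of play, a family of
positions whose regions are pairwise disjoint and have dense union (Oxtoby's argument). A point in
all of these dense open sets follows a single infinite play, so it does not lie in `Y`, and `Y` is
meagre.

Finally, in inning `n` TWO only has to cover a closed nowhere dense set `N`. If `N` is
zero-dimensional and Lindelöf, it has a continuous map to `ℕ` each of whose fibres lies in a member
of the given cover; extending this map to the whole space by Tietze's theorem, the preimages of
small balls around the integers form a discrete family.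
-/

open Set Topology

theorem ofFn_succ_eq_append {α : Type*} (O : ℕ → α) (n : ℕ) :
    (List.ofFn fun i : Fin (n + 1) => O i) = (List.ofFn fun i : Fin n => O i) ++ [O n] := by
  rw [List.ofFn_succ', List.concat_eq_append]
  rfl

theorem getLastD_ofFn_succ {α : Type*} (O : ℕ → α) (n : ℕ) (d : α) :
    (List.ofFn fun i : Fin (n + 1) => O i).getLastD d = O n := by
  rw [ofFn_succ_eq_append, List.getLastD_concat]

theorem isMeagre_iff_exists_seq_isOpen_dense {X : Type*} [TopologicalSpace X] {Y : Set X} :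
    IsMeagre Y ↔
      ∃ G : ℕ → Set X, (∀ n, IsOpen (G n) ∧ Dense (G n)) ∧ Disjoint Y (⋂ n, G n) := by
  rw [IsMeagre, mem_residual_iff]
  constructor
  · rintro ⟨S, hopen, hdense, hcountable, hS⟩
    obtain ⟨G, hG⟩ := (hcountable.insert univ).exists_eq_range (insert_nonempty univ S)
    refine ⟨G, fun n => ?_, ?_⟩
    · rcases hG ▸ mem_range_self n with h | h
      · exact h ▸ ⟨isOpen_univ, dense_univ⟩
      · exact ⟨hopen _ h, hdense _ h⟩
    · rw [← subset_compl_iff_disjoint_left, ← sInter_range, ← hG, sInter_insert, univ_inter]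
      exact hS
  · rintro ⟨G, hG, hY⟩
    refine ⟨range G, forall_mem_range.2 fun n => (hG n).1, forall_mem_range.2 fun n => (hG n).2,
      countable_range G, ?_⟩
    rw [sInter_range]
    exact hY.subset_compl_left

/-! ### Discrete families -/

section Discrete

variable {X : Type*} [TopologicalSpace X] {𝒜 : Set (Set X)}

theorem IsDiscreteFam.locallyFinite (h𝒜 : IsDiscreteFam 𝒜) :
    LocallyFinite (fun A : 𝒜 => (A : Set X)) := by
  intro x
  obtain ⟨U, hU, hsub⟩ := h𝒜 x
  refine ⟨U, hU, Subsingleton.finite fun A hA B hB => ?_⟩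
  exact Subtype.ext (hsub ⟨A.2, hA⟩ ⟨B.2, hB⟩)

theorem IsDiscreteFam.disjoint_closure_sUnion_sdiff (h𝒜 : IsDiscreteFam 𝒜) {A : Set X}
    (hA : A ∈ 𝒜) : Disjoint (closure A) (closure (⋃₀ (𝒜 \ {A}))) := by
  refine disjoint_left.2 fun x hxA hx => ?_
  obtain ⟨U, hU, hsub⟩ := h𝒜 x
  obtain ⟨y, hyU, hyA⟩ := mem_closure_iff_nhds.1 hxA U hU
  obtain ⟨z, hzU, B, ⟨hB, hBA⟩, hzB⟩ := mem_closure_iff_nhds.1 hx U hU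
  exact hBA (hsub ⟨hB, z, hzB, hzU⟩ ⟨hA, y, hyA, hyU⟩)

theorem IsDiscreteFam.exists_subset_closure (h𝒜 : IsDiscreteFam 𝒜) {J : Set X}
    (hJ : IsConnected J) (hdense : J ⊆ closure (⋃₀ 𝒜)) : ∃ A ∈ 𝒜, J ⊆ closure A := by
  obtain ⟨x, hxJ⟩ := hJ.nonempty
  obtain ⟨⟨A, hA⟩, hxA⟩ : ∃ A : 𝒜, x ∈ closure (A : Set X) := by
    rw [← mem_iUnion, ← h𝒜.locallyFinite.closure_iUnion, ← sUnion_eq_iUnion]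
    exact hdense hxJ
  have hdisj := h𝒜.disjoint_closure_sUnion_sdiff hA
  have hcover : J ⊆ closure A ∪ closure (⋃₀ (𝒜 \ {A})) := by
    rwa [← closure_union, ← sUnion_insert, insert_sdiff_singleton, insert_eq_of_mem hA]
  refine ⟨A, hA, ?_⟩
  rcases isPreconnected_iff_subset_of_disjoint_closed.1 hJ.isPreconnected _ _ isClosed_closure
    isClosed_closure hcover (by rw [hdisj.inter_eq, inter_empty]) with h | h
  · exact h
  · exact (disjoint_left.1 hdisj hxA (h hxJ)).elim

theorem isDiscreteFam_image_of_subset_preimage_ball {f : X → ℝ} (hf : Continuous f)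
    {V : ℕ → Set X} (hV : ∀ n, V n ⊆ f ⁻¹' Metric.ball n (1 / 4)) (I : Set ℕ) :
    IsDiscreteFam (V '' I) := by
  intro x
  refine ⟨f ⁻¹' Metric.ball (f x) (1 / 4),
    hf.continuousAt.preimage_mem_nhds (Metric.ball_mem_nhds _ (by norm_num)), ?_⟩
  have hdist : ∀ n, (V n ∩ f ⁻¹' Metric.ball (f x) (1 / 4)).Nonempty →
      dist (n : ℝ) (f x) < 1 / 2 := by
    rintro n ⟨y, hyV, hyx⟩
    have hyn : dist (f y) n < 1 / 4 := hV n hyV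
    have hyx : dist (f y) (f x) < 1 / 4 := hyx
    linarith [dist_triangle_left (n : ℝ) (f x) (f y)]
  rintro _ ⟨⟨n, -, rfl⟩, hn⟩ _ ⟨⟨m, -, rfl⟩, hm⟩
  have hnm : dist n m < 1 := by
    rw [← Nat.dist_cast_real]
    linarith [dist_triangle_right (n : ℝ) m (f x), hdist n hn, hdist m hm]
  congr
  by_contra hne
  exact (Nat.pairwise_one_le_dist hne).not_gt hnm

end Discrete

/-! ### Covering closed zero-dimensional sets -/

section Covering

variable {X : Type*} [TopologicalSpace X]

theorem IsOpenCover.preimage {Z : Type*} [TopologicalSpace Z] {f : Z → X} (hf : Continuous f)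
    {𝒰 : Set (Set X)} (h𝒰 : IsOpenCover 𝒰) : IsOpenCover (preimage f '' 𝒰) := by
  refine ⟨forall_mem_image.2 fun U hU => (h𝒰.1 U hU).preimage hf, ?_⟩
  rw [sUnion_image, ← preimage_sUnion, h𝒰.2, preimage_univ]

theorem ZeroDimensional.exists_continuousMap_nat [LindelofSpace X] (hX : ZeroDimensional X)
    {𝒰 : Set (Set X)} (h𝒰 : IsOpenCover 𝒰) :
    ∃ f : C(X, ℕ), ∀ x, ∃ U ∈ 𝒰, f ⁻¹' {f x} ⊆ U := by
  have hclopen : ∀ x, ∃ W, IsClopen W ∧ x ∈ W ∧ ∃ U ∈ 𝒰, W ⊆ U := by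
    intro x
    obtain ⟨U, hU, hxU⟩ : x ∈ ⋃₀ 𝒰 := h𝒰.2 ▸ mem_univ x
    obtain ⟨W, hW, hxW, hWU⟩ := hX x U (h𝒰.1 U hU) hxU
    exact ⟨W, hW, hxW, U, hU, hWU⟩
  choose W hW hxW hWU using hclopen
  obtain ⟨t, ht, htW⟩ :=
    LindelofSpace.elim_nhds_subcover W fun x => (hW x).isOpen.mem_nhds (hxW x)
  rcases isEmpty_or_nonempty X with hempty | ⟨⟨x₀⟩⟩
  · exact ⟨.const X 0, isEmptyElim⟩
  have hmem : ∀ x, ∃ y ∈ t, x ∈ W y := fun x => by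
    have hx : x ∈ ⋃ y ∈ t, W y := htW ▸ mem_univ x
    simpa only [mem_iUnion, exists_prop] using hx
  obtain ⟨e, rfl⟩ := ht.exists_eq_range ((hmem x₀).imp fun _ h => h.1)
  have hex : ∀ x, ∃ n, x ∈ W (e n) := fun x => exists_range_iff.1 (hmem x)
  classical
  refine ⟨⟨fun x => Nat.find (hex x), continuous_discrete_rng.2 fun n => ?_⟩, fun x => ?_⟩
  · rw [preimage_find_eq_disjointed]
    exact (disjointedRec (p := IsClopen) (fun _ i h => h.diff (hW (e i))) (hW (e n))).isOpen
  · obtain ⟨U, hU, hsub⟩ := hWU (e (Nat.find (hex x)))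
    refine ⟨U, hU, fun y (hy : Nat.find (hex y) = Nat.find (hex x)) => hsub ?_⟩
    exact hy ▸ Nat.find_spec (hex y)

theorem twoWinsGone_of_isClosed_of_zeroDimensional [NormalSpace X] [LindelofSpace X] {N : Set X}
    (hN : IsClosed N) (hzero : ZeroDimensional N) : TwoWinsGone X N := by
  intro 𝒰 h𝒰
  have : LindelofSpace N := hN.isClosedEmbedding_subtypeVal.LindelofSpace
  obtain ⟨f, hf⟩ := hzero.exists_continuousMap_nat (h𝒰.preimage continuous_subtype_val)
  have hfibre : ∀ n ∈ range f, ∃ U ∈ 𝒰, f ⁻¹' {n} ⊆ Subtype.val ⁻¹' U := by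
    simpa only [forall_mem_range, exists_mem_image] using hf
  choose! U hU hfU using hfibre
  obtain ⟨F, hF⟩ :=
    (ContinuousMap.comp ⟨Nat.cast, continuous_of_discreteTopology⟩ f : C(N, ℝ)).exists_restrict_eq
      hN
  have hFf : ∀ x : N, F x = f x := DFunLike.congr_fun hF
  refine ⟨(fun n : ℕ => F ⁻¹' Metric.ball n (1 / 4) ∩ U n) '' range f, ⟨?_, ?_⟩, ?_⟩
  · exact isDiscreteFam_image_of_subset_preimage_ball F.continuous (fun n => inter_subset_left) _
  · rintro _ ⟨n, hn, rfl⟩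
    exact ⟨(Metric.isOpen_ball.preimage F.continuous).inter (h𝒰.1 _ (hU n hn)), U n, hU n hn,
      inter_subset_right⟩
  · intro x hx
    have hfx : f ⟨x, hx⟩ ∈ range f := mem_range_self _
    refine ⟨_, mem_image_of_mem _ hfx, ?_, hfU _ hfx (mem_singleton _)⟩
    rw [mem_preimage, hFf ⟨x, hx⟩]
    exact Metric.mem_ball_self (by norm_num)

theorem twoWinsGomega_of_subset_iUnion {Y : Set X} {N : ℕ → Set X}
    (hN : ∀ n, TwoWinsGone X (N n)) (hY : Y ⊆ ⋃ n, N n) : TwoWinsGomega X Y := by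
  choose! F hlegal hcover using hN
  let τ : List (Set (Set X)) → Set (Set X) := fun l => F (l.length - 1) (l.getLastD ∅)
  have hlast : ∀ (U : ℕ → Set (Set X)) (n : ℕ),
      τ (List.ofFn fun i : Fin (n + 1) => U i) = F n (U n) := by
    intro U n
    simp only [τ, List.length_ofFn, Nat.add_sub_cancel, getLastD_ofFn_succ]
  refine ⟨τ, fun U hU => ⟨fun n => ?_, hY.trans (iUnion_mono fun n => ?_)⟩⟩
  · rw [hlast]
    exact hlegal n _ (hU n)
  · rw [hlast]
    exact hcover n _ (hU n)

theorem twoWinsGomega_of_isMeagre [NormalSpace X] [LindelofSpace X]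
    (hzero : ∀ N : Set X, IsClosed N → IsNowhereDense N → ZeroDimensional N) {Y : Set X}
    (hY : IsMeagre Y) : TwoWinsGomega X Y := by
  obtain ⟨G, hG, hYG⟩ := isMeagre_iff_exists_seq_isOpen_dense.1 hY
  refine twoWinsGomega_of_subset_iUnion (N := fun n => (G n)ᶜ) (fun n => ?_) ?_
  · obtain ⟨hclosed, hnd⟩ : IsClosed (G n)ᶜ ∧ IsNowhereDense (G n)ᶜ := by
      rw [isClosed_isNowhereDense_iff_compl, compl_compl]
      exact hG n
    exact twoWinsGone_of_isClosed_of_zeroDimensional hclosed (hzero _ hclosed hnd)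
  · rw [← compl_iInter]
    exact hYG.subset_compl_right

end Covering

/-! ### Strategies of TWO in the Banach–Mazur game -/

section BanachMazur

variable {X : Type*} [TopologicalSpace X] {Y : Set X}

theorem twoWinsMB_of_forall_disjoint_iInter {τ : List (Set X) → Set X}
    (hlegal : ∀ (O : ℕ → Set X) (n : ℕ), IsOpen (O n) → (O n).Nonempty →
      IsOpen (τ (List.ofFn fun i : Fin (n + 1) => O i)) ∧
      (τ (List.ofFn fun i : Fin (n + 1) => O i)).Nonempty ∧
      τ (List.ofFn fun i : Fin (n + 1) => O i) ⊆ O n)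
    (hwin : ∀ O : ℕ → Set X, Disjoint Y (⋂ n, τ (List.ofFn fun i : Fin (n + 1) => O i))) :
    TwoWinsMB X Y := by
  refine ⟨τ, fun O n hO => hlegal O n (hO n le_rfl).1 (hO n le_rfl).2.1, fun O hO => ?_⟩
  refine ((hwin O).mono_right (subset_iInter fun n => ?_)).inter_eq
  exact (iInter_subset O (n + 1)).trans ((hO (n + 1)).2.2 n rfl)

theorem twoWinsMB_of_isMeagre (hY : IsMeagre Y) : TwoWinsMB X Y := by
  obtain ⟨G, hG, hYG⟩ := isMeagre_iff_exists_seq_isOpen_dense.1 hY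
  let τ : List (Set X) → Set X := fun l => l.getLastD ∅ ∩ G (l.length - 1)
  have hlast : ∀ (O : ℕ → Set X) (n : ℕ),
      τ (List.ofFn fun i : Fin (n + 1) => O i) = O n ∩ G n := by
    intro O n
    simp only [τ, List.length_ofFn, Nat.add_sub_cancel, getLastD_ofFn_succ]
  refine twoWinsMB_of_forall_disjoint_iInter (τ := τ) (fun O n hopen hne => ?_) fun O => ?_
  · rw [hlast]
    exact ⟨hopen.inter (hG n).1, (hG n).2.inter_open_nonempty _ hopen hne, inter_subset_left⟩
  · simp only [hlast]
    exact hYG.mono_right (iInter_mono fun n => inter_subset_right)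

/-- The cover of a Hausdorff space by the open sets whose closure does not contain `J`. The
condition is dropped when `J` is not nontrivial, so that this is an open cover for every `J`. -/
def avoidingCover (J : Set X) : Set (Set X) :=
  {U | IsOpen U ∧ (J.Nontrivial → ¬ J ⊆ closure U)}

theorem isOpenCover_avoidingCover [T2Space X] (J : Set X) : IsOpenCover (avoidingCover J) := by
  refine ⟨fun U hU => hU.1, eq_univ_of_forall fun x => ?_⟩
  by_cases hJ : J.Nontrivial
  · obtain ⟨y, hyJ, hyx⟩ := hJ.exists_ne x
    obtain ⟨V, U, hV, hU, hyV, hxU, hdisj⟩ := t2_separation hyx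
    refine ⟨U, ⟨hU, fun _ hsub => ?_⟩, hxU⟩
    exact disjoint_left.1 (hdisj.closure_right hV) hyV (hsub hyJ)
  · exact ⟨univ, ⟨isOpen_univ, fun h => (hJ h).elim⟩, mem_univ x⟩

theorem LegalTwoMove.not_subset_closure_sUnion {J : Set X} (hJ : IsConnected J)
    (hJnt : J.Nontrivial) {𝒱 : Set (Set X)} (h𝒱 : LegalTwoMove (avoidingCover J) 𝒱) :
    ¬ J ⊆ closure (⋃₀ 𝒱) := by
  intro hsub
  obtain ⟨A, hA, hJA⟩ := h𝒱.1.exists_subset_closure hJ hsub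
  obtain ⟨-, U, hU, hAU⟩ := h𝒱.2 A hA
  exact hU.2 hJnt (hJA.trans (closure_mono hAU))

theorem twoWinsMB_of_twoWinsGomega [T2Space X] (hX : HasConnectedPiBase X)
    (hY : TwoWinsGomega X Y) : TwoWinsMB X Y := by
  obtain ⟨P, hP, hPsub⟩ := hX
  choose! J hJP hJsub using hPsub
  obtain ⟨σ, hσ⟩ := hY
  have hplay := fun O : ℕ → Set X =>
    hσ (fun n => avoidingCover (J (O n))) fun n => isOpenCover_avoidingCover _
  let τ : List (Set X) → Set X := fun l =>
    J (l.getLastD ∅) \ closure (⋃₀ σ (l.map fun O => avoidingCover (J O)))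
  have hresponse : ∀ (O : ℕ → Set X) (n : ℕ), τ (List.ofFn fun i : Fin (n + 1) => O i) =
      J (O n) \ closure (⋃₀ σ (List.ofFn fun i : Fin (n + 1) => avoidingCover (J (O i)))) := by
    intro O n
    simp only [τ, List.map_ofFn, Function.comp_def, getLastD_ofFn_succ]
  refine twoWinsMB_of_forall_disjoint_iInter (τ := τ) (fun O n hopen hne => ?_) fun O => ?_
  · rw [hresponse]
    obtain ⟨hJopen, hJconn, hJnt⟩ := hP _ (hJP _ hopen hne)
    exact ⟨hJopen.sdiff isClosed_closure,
      sdiff_nonempty.2 (((hplay O).1 n).not_subset_closure_sUnion hJconn hJnt),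
      sdiff_subset.trans (hJsub _ hopen hne)⟩
  · simp only [hresponse]
    refine disjoint_left.2 fun y hy hyO => ?_
    obtain ⟨n, hn⟩ := mem_iUnion.1 ((hplay O).2 hy)
    exact (mem_iInter.1 hyO n).2 (subset_closure hn)

end BanachMazur

/-! ### Trees of positions -/

section Tree

variable {α : Type*} {M M' : List α → Set α} {p : List α}

/-- The position `p`, a finite sequence of moves, obeys the rule `M`, which prescribes the set
`M q` of moves admitted after the position `q`. -/
def Obeys (M : List α → Set α) (p : List α) : Prop :=
  ∀ q a, q ++ [a] <+: p → a ∈ M q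

theorem obeys_nil (M : List α → Set α) : Obeys M [] := by
  intro q a h
  simp at h

theorem obeys_append_singleton {a : α} : Obeys M (p ++ [a]) ↔ Obeys M p ∧ a ∈ M p := by
  refine ⟨fun h => ⟨fun q b hq => h q b (hq.trans (List.prefix_append _ _)),
    h p a List.prefix_rfl⟩, ?_⟩
  rintro ⟨hp, ha⟩ q b hq
  rcases List.prefix_concat_iff.1 hq with heq | hq
  · obtain ⟨rfl, hb⟩ := List.append_inj' heq rfl
    exact List.singleton_injective hb ▸ ha
  · exact hp q b hq

theorem Obeys.mono (hM : ∀ q, Obeys M' q → M q ⊆ M' q) (hp : Obeys M p) : Obeys M' p := by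
  induction p using List.reverseRecOn with
  | nil => exact obeys_nil M'
  | append_singleton p a ih =>
    obtain ⟨hp, ha⟩ := obeys_append_singleton.1 hp
    exact obeys_append_singleton.2 ⟨ih hp, hM p (ih hp) ha⟩

theorem Obeys.getElem_mem (hp : Obeys M p) {k : ℕ} (hk : k < p.length) :
    p[k] ∈ M (p.take k) :=
  hp _ _ (by rw [List.take_append_getElem hk]; exact List.take_prefix _ _)

theorem exists_obeys_of_length_succ {n : ℕ} (hp : Obeys M p) (hn : p.length = n + 1) :
    ∃ q a, p = q ++ [a] ∧ Obeys M q ∧ a ∈ M q ∧ q.length = n := by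
  obtain rfl | ⟨q, a, rfl⟩ := p.eq_nil_or_concat'
  · simp at hn
  · obtain ⟨hq, ha⟩ := obeys_append_singleton.1 hp
    exact ⟨q, a, rfl, hq, ha, by simpa using hn⟩

variable {X : Type*} {R : List α → Set X}

theorem Obeys.eq_of_mem_of_mem
    (hanti : ∀ p, Obeys M p → ∀ a ∈ M p, R (p ++ [a]) ⊆ R p)
    (hdisj : ∀ p, Obeys M p → (M p).PairwiseDisjoint fun a => R (p ++ [a])) {x : X} {n : ℕ} :
    ∀ {p q : List α}, Obeys M p → p.length = n → x ∈ R p → Obeys M q → q.length = n → x ∈ R q →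
      p = q := by
  induction n with
  | zero =>
    intro p q _ hpn _ _ hqn _
    rw [List.length_eq_zero_iff.1 hpn, List.length_eq_zero_iff.1 hqn]
  | succ n ih =>
    intro p q hp hpn hxp hq hqn hxq
    obtain ⟨p, a, rfl, hp, ha, hpn⟩ := exists_obeys_of_length_succ hp hpn
    obtain ⟨q, b, rfl, hq, hb, hqn⟩ := exists_obeys_of_length_succ hq hqn
    obtain rfl := ih hp hpn (hanti p hp a ha hxp) hq hqn (hanti q hq b hb hxq)
    rw [(hdisj p hp).elim_set ha hb x hxp hxq]

theorem exists_branch_of_forall_exists_obeys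
    (hanti : ∀ p, Obeys M p → ∀ a ∈ M p, R (p ++ [a]) ⊆ R p)
    (hdisj : ∀ p, Obeys M p → (M p).PairwiseDisjoint fun a => R (p ++ [a])) {x : X}
    (hx : ∀ n, ∃ p, Obeys M p ∧ p.length = n ∧ x ∈ R p) :
    ∃ O : ℕ → α, ∀ n, Obeys M (List.ofFn fun i : Fin n => O i) ∧
      x ∈ R (List.ofFn fun i : Fin n => O i) := by
  choose p hp hlen hxp using hx
  have hstep : ∀ n, ∃ a, p (n + 1) = p n ++ [a] := by
    intro n
    obtain ⟨q, a, hqa, hq, ha, hqn⟩ := exists_obeys_of_length_succ (hp (n + 1)) (hlen (n + 1))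
    have hxq : x ∈ R q := hanti q hq a ha (hqa ▸ hxp (n + 1))
    exact ⟨a, Obeys.eq_of_mem_of_mem hanti hdisj (hp n) (hlen n) (hxp n) hq hqn hxq ▸ hqa⟩
  choose O hO using hstep
  have hpO : ∀ n, p n = List.ofFn fun i : Fin n => O i := by
    intro n
    induction n with
    | zero => exact List.length_eq_zero_iff.1 (hlen 0)
    | succ n ih => rw [hO, ih, ofFn_succ_eq_append]
  exact ⟨O, fun n => hpO n ▸ ⟨hp n, hxp n⟩⟩

theorem dense_biUnion_obeys_length [TopologicalSpace X] (hnil : R [] = univ)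
    (hdense : ∀ p, Obeys M p → R p ⊆ closure (⋃ a ∈ M p, R (p ++ [a]))) (n : ℕ) :
    Dense (⋃ p ∈ {p | Obeys M p ∧ p.length = n}, R p) := by
  induction n with
  | zero =>
    refine dense_univ.mono ?_
    rw [← hnil]
    exact subset_biUnion_of_mem (u := R) ⟨obeys_nil M, rfl⟩
  | succ n ih =>
    refine dense_closure.1 (ih.mono (iUnion₂_subset fun p hp => (hdense p hp.1).trans ?_))
    refine closure_mono (iUnion₂_subset fun a ha => ?_)
    exact subset_biUnion_of_mem (u := R)
      ⟨obeys_append_singleton.2 ⟨hp.1, ha⟩, by simp [hp.2]⟩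

end Tree

/-! ### Oxtoby's theorem -/

section Oxtoby

variable {X : Type*} {τ : List (Set X) → Set X}

/-- The set inside which ONE has to play at the position `p` (the sequence of ONE's moves so far)
when TWO follows `τ`: TWO's last answer, or the whole space in the first inning. -/
def region (τ : List (Set X) → Set X) (p : List (Set X)) : Set X :=
  if p = [] then univ else τ p

@[simp]
theorem region_append_singleton (p : List (Set X)) (A : Set X) :
    region τ (p ++ [A]) = τ (p ++ [A]) := by
  simp [region]

theorem region_ofFn_succ (O : ℕ → Set X) (n : ℕ) :
    region τ (List.ofFn fun i : Fin (n + 1) => O i) = τ (List.ofFn fun i : Fin (n + 1) => O i) := by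
  simp [region]

variable [TopologicalSpace X] {Y : Set X}

theorem exists_pairwiseDisjoint_subset_closure_biUnion {R : Set X} (hR : IsOpen R)
    {T : Set X → Set X}
    (hT : ∀ A, IsOpen A → A.Nonempty → A ⊆ R → (T A).Nonempty ∧ T A ⊆ A) :
    ∃ 𝒜 ⊆ {A | IsOpen A ∧ A.Nonempty ∧ A ⊆ R}, 𝒜.PairwiseDisjoint T ∧
      R ⊆ closure (⋃ A ∈ 𝒜, T A) := by
  obtain ⟨𝒜, h𝒜⟩ := zorn_subset
    {𝒜 : Set (Set X) | 𝒜 ⊆ {A | IsOpen A ∧ A.Nonempty ∧ A ⊆ R} ∧ 𝒜.PairwiseDisjoint T}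
    fun c hc hchain => ⟨⋃₀ c, ⟨sUnion_subset fun s hs => (hc hs).1,
      (pairwiseDisjoint_sUnion hchain.directedOn).2 fun s hs => (hc hs).2⟩,
      fun s => subset_sUnion_of_mem⟩
  refine ⟨𝒜, h𝒜.prop.1, h𝒜.prop.2, ?_⟩
  by_contra hsub
  set D := closure (⋃ A ∈ 𝒜, T A)
  have hopen : IsOpen (R \ D) := hR.sdiff isClosed_closure
  obtain ⟨⟨x, hx⟩, hTR⟩ := hT _ hopen (sdiff_nonempty.2 hsub) sdiff_subset
  have hmem : R \ D ∈ 𝒜 := by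
    refine h𝒜.mem_of_prop_insert ⟨insert_subset ⟨hopen, sdiff_nonempty.2 hsub, sdiff_subset⟩
      h𝒜.prop.1, h𝒜.prop.2.insert fun A hA _ => ?_⟩
    exact disjoint_left.2 fun y hy hyA =>
      (hTR hy).2 (subset_closure (mem_biUnion hA hyA))
  exact (hTR hx).2 (subset_closure (mem_biUnion hmem hx))

/-- ONE's legal moves at the position `p` in the Banach–Mazur game when TWO follows `τ`. -/
def legalMoves (τ : List (Set X) → Set X) (p : List (Set X)) : Set (Set X) :=
  {A | IsOpen A ∧ A.Nonempty ∧ A ⊆ region τ p}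

/-- TWO's answers under `τ` are legal as long as ONE plays legally: the first clause of
`TwoWinsMB`, in terms of positions. -/
def IsLegalStrategy (τ : List (Set X) → Set X) : Prop :=
  ∀ p, Obeys (legalMoves τ) p → ∀ A ∈ legalMoves τ p,
    IsOpen (τ (p ++ [A])) ∧ (τ (p ++ [A])).Nonempty ∧ τ (p ++ [A]) ⊆ A

theorem TwoWinsMB.exists_isLegalStrategy (hY : TwoWinsMB X Y) :
    ∃ τ : List (Set X) → Set X, IsLegalStrategy τ ∧ ∀ O : ℕ → Set X,
      (∀ n, O n ∈ legalMoves τ (List.ofFn fun i : Fin n => O i)) → Y ∩ ⋂ n, O n = ∅ := by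
  obtain ⟨τ, hlegal, hwin⟩ := hY
  refine ⟨τ, fun p hp A hA => ?_, fun O hO => hwin O fun n => ⟨(hO n).1, (hO n).2.1, ?_⟩⟩
  · have hpA := obeys_append_singleton.2 ⟨hp, hA⟩
    set r := p ++ [A] with hr
    have hlen : r.length = p.length + 1 := by simp [hr]
    have htake : ∀ k ≤ r.length, (List.ofFn fun i : Fin k => r.getD i ∅) = r.take k := by
      intro k hk
      refine List.ext_getElem (by simpa using hk) fun i hi _ => ?_
      simp only [List.length_ofFn] at hi
      simp [List.getElem?_eq_getElem (hi.trans_le hk)]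
    have hanswer := hlegal (fun k => r.getD k ∅) p.length fun k hk => ?_
    · rw [htake _ hlen.ge, ← hlen, List.take_length] at hanswer
      simpa [hr] using hanswer
    · have hklt : k < r.length := by omega
      have hmem := hpA.getElem_mem hklt
      rw [← List.getD_eq_getElem r ∅ hklt, ← htake k hklt.le] at hmem
      refine ⟨hmem.1, hmem.2.1, ?_⟩
      rintro j rfl
      exact hmem.2.2.trans_eq (region_ofFn_succ (fun k => r.getD k ∅) j)
  · rintro j rfl
    exact (hO (j + 1)).2.2.trans_eq (region_ofFn_succ O j)

theorem IsLegalStrategy.isOpen_region (hτ : IsLegalStrategy τ) {p : List (Set X)}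
    (hp : Obeys (legalMoves τ) p) : IsOpen (region τ p) := by
  obtain rfl | ⟨q, A, rfl⟩ := p.eq_nil_or_concat'
  · simp [region]
  · obtain ⟨hq, hA⟩ := obeys_append_singleton.1 hp
    simpa using (hτ q hq A hA).1

theorem IsLegalStrategy.exists_subset_legalMoves (hτ : IsLegalStrategy τ) :
    ∃ M : List (Set X) → Set (Set X), ∀ p, Obeys (legalMoves τ) p → M p ⊆ legalMoves τ p ∧
      ((M p).PairwiseDisjoint fun A => region τ (p ++ [A])) ∧
      region τ p ⊆ closure (⋃ A ∈ M p, region τ (p ++ [A])) := by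
  have hex : ∀ p, Obeys (legalMoves τ) p → ∃ 𝒜 ⊆ legalMoves τ p,
      (𝒜.PairwiseDisjoint fun A => region τ (p ++ [A])) ∧
      region τ p ⊆ closure (⋃ A ∈ 𝒜, region τ (p ++ [A])) := by
    intro p hp
    refine exists_pairwiseDisjoint_subset_closure_biUnion (hτ.isOpen_region hp) ?_
    intro A hopen hne hsub
    simpa using (hτ p hp A ⟨hopen, hne, hsub⟩).2
  choose! M hM using hex
  exact ⟨M, hM⟩

theorem isMeagre_of_twoWinsMB (hY : TwoWinsMB X Y) : IsMeagre Y := by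
  obtain ⟨τ, hτ, hwin⟩ := hY.exists_isLegalStrategy
  obtain ⟨M, hM⟩ := hτ.exists_subset_legalMoves
  have hlegal : ∀ p, Obeys M p → Obeys (legalMoves τ) p :=
    fun p => Obeys.mono fun q hq => (hM q hq).1
  have hsub : ∀ p, Obeys M p → ∀ A ∈ M p, region τ (p ++ [A]) ⊆ A := by
    intro p hp A hA
    simpa using (hτ p (hlegal p hp) A ((hM p (hlegal p hp)).1 hA)).2.2
  rw [isMeagre_iff_exists_seq_isOpen_dense]
  refine ⟨fun n => ⋃ p ∈ {p | Obeys M p ∧ p.length = n}, region τ p, fun n => ⟨?_, ?_⟩, ?_⟩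
  · exact isOpen_biUnion fun p hp => hτ.isOpen_region (hlegal p hp.1)
  · exact dense_biUnion_obeys_length (if_pos rfl) (fun p hp => (hM p (hlegal p hp)).2.2) n
  · refine disjoint_left.2 fun y hy hyG => ?_
    obtain ⟨O, hO⟩ := exists_branch_of_forall_exists_obeys (M := M) (R := region τ) (x := y)
      (fun p hp A hA => (hsub p hp A hA).trans ((hM p (hlegal p hp)).1 hA).2.2)
      (fun p hp => (hM p (hlegal p hp)).2.1)
      (fun n => by simpa [and_assoc] using mem_iInter.1 hyG n)
    have hOM : ∀ n, O n ∈ M (List.ofFn fun i : Fin n => O i) := fun n =>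
      (obeys_append_singleton.1 (ofFn_succ_eq_append O n ▸ (hO (n + 1)).1)).2
    have hyO : ∀ n, y ∈ O n := fun n =>
      hsub _ (hO n).1 _ (hOM n) (ofFn_succ_eq_append O n ▸ (hO (n + 1)).2)
    have hempty := hwin O fun n => (hM _ (hlegal _ (hO n).1)).1 (hOM n)
    exact hempty.subset ⟨hy, mem_iInter.2 hyO⟩

theorem isMeagre_iff_twoWinsMB : IsMeagre Y ↔ TwoWinsMB X Y :=
  ⟨twoWinsMB_of_isMeagre, isMeagre_of_twoWinsMB⟩

end Oxtoby

/-! ### Connected π-bases and zero-dimensional subspaces -/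

theorem hasConnectedPiBase_of_locallyConnectedSpace (X : Type*) [TopologicalSpace X] [T1Space X]
    [LocallyConnectedSpace X] [PerfectSpace X] : HasConnectedPiBase X := by
  refine ⟨{B | IsOpen B ∧ IsConnected B ∧ B.Nontrivial}, fun B hB => hB, ?_⟩
  rintro U hU ⟨x, hxU⟩
  have hopen : IsOpen (connectedComponentIn U x) := hU.connectedComponentIn
  refine ⟨_, ⟨hopen, isConnected_connectedComponentIn_iff.2 hxU, ?_⟩,
    connectedComponentIn_subset U x⟩
  exact (infinite_of_mem_nhds x (hopen.mem_nhds (mem_connectedComponentIn hxU))).nontrivial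

theorem zeroDimensional_of_totallyDisconnectedSpace (X : Type*) [TopologicalSpace X] [T2Space X]
    [LocallyCompactSpace X] [TotallyDisconnectedSpace X] : ZeroDimensional X := fun _ _ hU hx =>
  loc_compact_Haus_tot_disc_of_zero_dim.exists_subset_of_mem_open hx hU

theorem isTotallyDisconnected_of_interior_eq_empty {X : Type*} [LinearOrder X] [DenselyOrdered X]
    [TopologicalSpace X] [OrderClosedTopology X] {s : Set X} (hs : interior s = ∅) :
    IsTotallyDisconnected s := by
  intro t hts ht x hx y hy
  by_contra hne
  wlog hxy : x < y generalizing x y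
  · exact this hy hx (Ne.symm hne) (lt_of_le_of_ne (not_lt.1 hxy) (Ne.symm hne))
  have hIoo : Ioo x y ⊆ interior s :=
    interior_maximal (Ioo_subset_Icc_self.trans ((ht.Icc_subset hx hy).trans hts)) isOpen_Ioo
  exact (nonempty_Ioo.2 hxy).ne_empty (subset_empty_iff.1 (hs ▸ hIoo))

theorem zeroDimensional_of_isClosed_of_isNowhereDense {X : Type*} [LinearOrder X]
    [DenselyOrdered X] [TopologicalSpace X] [OrderClosedTopology X] [LocallyCompactSpace X]
    {N : Set X} (hN : IsClosed N) (hnd : IsNowhereDense N) : ZeroDimensional N := by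
  have : LocallyCompactSpace N := hN.locallyCompactSpace
  have : TotallyDisconnectedSpace N := totallyDisconnectedSpace_subtype_iff.2
    (isTotallyDisconnected_of_interior_eq_empty (hN.isNowhereDense_iff.1 hnd))
  exact zeroDimensional_of_totallyDisconnectedSpace N

theorem statement13_general {X : Type*} [TopologicalSpace X] [T3Space X] [LindelofSpace X]
    (hpi : HasConnectedPiBase X)
    (hzero : ∀ N : Set X, IsClosed N → IsNowhereDense N → ZeroDimensional N) (Y : Set X) :
    (TwoWinsGomega X Y ↔ IsMeagre Y) ∧ (IsMeagre Y ↔ TwoWinsMB X Y) :=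
  ⟨⟨fun h => isMeagre_of_twoWinsMB (twoWinsMB_of_twoWinsGomega hpi h),
    twoWinsGomega_of_isMeagre hzero⟩, isMeagre_iff_twoWinsMB⟩

/-- For `Y ⊆ ℝ`: TWO wins `G^ω_d(𝒪,𝒪_Y)` iff `Y` is meager in `ℝ` iff
TWO wins the Banach–Mazur game `MB(Y,ℝ)`. -/
theorem statement13 (Y : Set ℝ) :
    (TwoWinsGomega ℝ Y ↔ IsMeagre Y) ∧ (IsMeagre Y ↔ TwoWinsMB ℝ Y) :=
  statement13_general (hasConnectedPiBase_of_locallyConnectedSpace ℝ)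
    (fun _ => zeroDimensional_of_isClosed_of_isNowhereDense) Y

end SSG
end
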